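/- arXiv:1512.09006 — 2 statements merged into one kernel-verified Lean document; each statement's English description precedes it below -/
import Mathlib

section
/- There exists an absolute constant A > 0 such that for every family C of n circles in ℝ² (with arbitrary radii), the number of points p ∈ ℝ² at which at least two circles of C are tangent to each other is at most A · n^{3/2}. -/
noncomputable section

abbrev Pt2 := EuclideanSpace ℝ (Fin 2)

/-- A circle in the plane: a metric sphere with positive radius. -/
def IsCircle2 (s : Set Pt2) : Prop :=
  ∃ c : Pt2, ∃ r : ℝ, 0 < r ∧ s = Metric.sphere c r

open MvPolynomial in
theorem sc_pderiv_comm (i j : Fin 3) (P : MvPolynomial (Fin 3) ℝ) :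
    pderiv i (pderiv j P) = pderiv j (pderiv i P) := by
  have h : ⁅(pderiv i : Derivation ℝ (MvPolynomial (Fin 3) ℝ) (MvPolynomial (Fin 3) ℝ)), (pderiv j : Derivation ℝ (MvPolynomial (Fin 3) ℝ) (MvPolynomial (Fin 3) ℝ))⁆ = 0 := by
    apply MvPolynomial.derivation_ext
    intro k
    simp [Derivation.commutator_apply, pderiv_X, Pi.single_apply]
    split_ifs <;> simp
  have := congrArg (fun d => d P) h
  simpa [Derivation.commutator_apply, sub_eq_zero] using this

def sc (k : ℝ × ℝ × ℝ) (t : ℝ) : Fin 3 → ℝ :=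
  ![k.1 + k.2.2 * ((1 - t ^ 2) / (1 + t ^ 2)), k.2.1 + k.2.2 * (2 * t / (1 + t ^ 2)), t]

open MvPolynomial in
theorem sc_hasDerivAt (k : ℝ × ℝ × ℝ) (P : MvPolynomial (Fin 3) ℝ) (t : ℝ) :
    HasDerivAt (fun t => eval (sc k t) P)
      (k.2.2 * (-4 * t / (1 + t ^ 2) ^ 2) * eval (sc k t) (pderiv 0 P)
        + k.2.2 * (2 * (1 - t ^ 2) / (1 + t ^ 2) ^ 2) * eval (sc k t) (pderiv 1 P)
        + eval (sc k t) (pderiv 2 P)) t := by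
  have hp : (1 + t ^ 2) ≠ 0 := by positivity
  have hd : HasDerivAt (fun t : ℝ => 1 + t ^ 2) (2 * t) t := by
    simpa using (hasDerivAt_pow 2 t).const_add 1
  have hn : HasDerivAt (fun t : ℝ => 1 - t ^ 2) (-(2 * t)) t := by
    simpa using (hasDerivAt_pow 2 t).const_sub 1
  have hl : HasDerivAt (fun t : ℝ => 2 * t) 2 t := by
    simpa using (hasDerivAt_id t).const_mul 2
  induction P using MvPolynomial.induction_on with
  | C a => simpa using hasDerivAt_const t a
  | add p q hp hq =>
    have e : (fun t => eval (sc k t) (p + q)) = fun t => eval (sc k t) p + eval (sc k t) q := by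
      ext; simp
    rw [e]
    refine (hp.fun_add hq).congr_deriv ?_
    simp only [map_add]
    ring
  | mul_X p i h =>
    have hX : HasDerivAt (fun t => sc k t i)
      (k.2.2 * (-4 * t / (1 + t ^ 2) ^ 2) * eval (sc k t) (pderiv 0 (X i : MvPolynomial (Fin 3) ℝ))
        + k.2.2 * (2 * (1 - t ^ 2) / (1 + t ^ 2) ^ 2) * eval (sc k t) (pderiv 1 (X i : MvPolynomial (Fin 3) ℝ))
        + eval (sc k t) (pderiv 2 (X i : MvPolynomial (Fin 3) ℝ))) t := by
      fin_cases i
      · simp only [sc, pderiv_X]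
        refine (((hn.fun_div hd hp).const_mul k.2.2).const_add k.1).congr_deriv ?_
        simp
        field_simp
        ring_nf
        simp
      · simp only [sc, pderiv_X]
        refine (((hl.fun_div hd hp).const_mul k.2.2).const_add k.2.1).congr_deriv ?_
        simp
        field_simp
        ring_nf
        simp
      · simp only [sc, pderiv_X]
        refine (hasDerivAt_id t).congr_deriv ?_
        simp
    have e : (fun t => eval (sc k t) (p * X i)) = fun t => eval (sc k t) p * sc k t i := by
      ext; simp
    rw [e]
    refine (h.fun_mul hX).congr_deriv ?_
    · simp only [Derivation.leibniz, eval_add, smul_eq_mul, eval_mul, eval_X]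
      ring

open MvPolynomial in
theorem sc_poly (k : ℝ × ℝ × ℝ) (P : MvPolynomial (Fin 3) ℝ) (d : ℕ) (h : P.totalDegree ≤ d) :
    ∃ q : Polynomial ℝ, q.natDegree ≤ 3 * d ∧
      ∀ t, q.eval t = (1 + t ^ 2) ^ d * eval (sc k t) P := by
  classical
  let mono : (Fin 3 →₀ ℕ) → Polynomial ℝ := fun m =>
    (Polynomial.C k.1 * (1 + Polynomial.X ^ 2) + Polynomial.C k.2.2 * (1 - Polynomial.X ^ 2)) ^ m 0 *
    (Polynomial.C k.2.1 * (1 + Polynomial.X ^ 2) + Polynomial.C k.2.2 * (2 * Polynomial.X)) ^ m 1 *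
    Polynomial.X ^ m 2 * (1 + Polynomial.X ^ 2) ^ (d - m 0 - m 1)
  have hm : ∀ m ∈ P.support, m 0 + m 1 + m 2 ≤ d := by
    intro m hm
    have := (le_totalDegree hm).trans h
    rw [Finsupp.sum_fintype _ _ (by simp)] at this
    simpa [Fin.sum_univ_three] using this
  refine ⟨∑ m ∈ P.support, Polynomial.C (P.coeff m) * mono m, ?_, ?_⟩
  · apply Polynomial.natDegree_sum_le_of_forall_le
    intro m hmm
    have h3 := hm m hmm
    refine (Polynomial.natDegree_C_mul_le _ _).trans ?_
    have e1 : (Polynomial.C k.1 * (1 + Polynomial.X ^ 2) + Polynomial.C k.2.2 * (1 - Polynomial.X ^ 2)).natDegree ≤ 2 := by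
      compute_degree
    have e2 : (Polynomial.C k.2.1 * (1 + Polynomial.X ^ 2) + Polynomial.C k.2.2 * (2 * Polynomial.X)).natDegree ≤ 2 := by
      compute_degree
    have e3 : (1 + Polynomial.X ^ 2 : Polynomial ℝ).natDegree ≤ 2 := by
      compute_degree
    have f1 := Polynomial.natDegree_pow_le_of_le (m 0) e1
    have f2 := Polynomial.natDegree_pow_le_of_le (m 1) e2
    have f3 := Polynomial.natDegree_pow_le_of_le (d - m 0 - m 1) e3
    have f4 : (Polynomial.X ^ m 2 : Polynomial ℝ).natDegree ≤ m 2 := by compute_degree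
    refine (Polynomial.natDegree_mul_le_of_le (Polynomial.natDegree_mul_le_of_le (Polynomial.natDegree_mul_le_of_le f1 f2) f4) f3).trans ?_
    omega
  · intro t
    have hp : (1 + t ^ 2) ≠ 0 := by positivity
    rw [Polynomial.eval_finsetSum, eval_eq', Finset.mul_sum]
    apply Finset.sum_congr rfl
    intro m hmm
    have h3 := hm m hmm
    obtain ⟨e, rfl⟩ : ∃ e, d = m 0 + m 1 + e := ⟨d - (m 0 + m 1), by omega⟩
    have : m 0 + m 1 + e - m 0 - m 1 = e := by omega
    simp only [mono, this, Fin.prod_univ_three, sc]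
    simp
    have g1 : k.1 * (1 + t ^ 2) + k.2.2 * (1 - t ^ 2) = (1 + t ^ 2) * (k.1 + k.2.2 * ((1 - t ^ 2) / (1 + t ^ 2))) := by
      field_simp
    have g2 : k.2.1 * (1 + t ^ 2) + k.2.2 * (2 * t) = (1 + t ^ 2) * (k.2.1 + k.2.2 * (2 * t / (1 + t ^ 2))) := by
      field_simp
    rw [g1, g2, mul_pow, mul_pow, pow_add, pow_add]
    ring

open MvPolynomial in
theorem sc_root (k : ℝ × ℝ × ℝ) (P : MvPolynomial (Fin 3) ℝ) (d : ℕ) (h : P.totalDegree ≤ d)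
    (s : Finset ℝ) (hs : 3 * d < s.card) (hz : ∀ t ∈ s, eval (sc k t) P = 0) (t : ℝ) :
    eval (sc k t) P = 0 := by
  obtain ⟨q, hq, he⟩ := sc_poly k P d h
  have : q = 0 := by
    apply Polynomial.eq_zero_of_natDegree_lt_card_of_eval_eq_zero' q s
    · intro i hi
      rw [he, hz i hi, mul_zero]
    · omega
  have h1 := he t
  rw [this] at h1
  have hp : (1 + t ^ 2) ^ d ≠ 0 := by positivity
  simpa [hp] using h1.symm

open MvPolynomial in
theorem sc_deg (P : MvPolynomial (Fin 3) ℝ) (i : Fin 3) :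
    (pderiv i P).totalDegree ≤ P.totalDegree - 1 := by
  conv_lhs => rw [P.as_sum]
  rw [map_sum]
  apply totalDegree_finsetSum_le
  intro m hm
  rw [pderiv_monomial]
  by_cases h0 : m i = 0
  · simp [h0]
  · refine (totalDegree_monomial_le _ _).trans ?_
    have h1 := le_totalDegree hm
    rw [Finsupp.sum_fintype _ _ (by simp)] at h1 ⊢
    fin_cases i <;> simp [Fin.sum_univ_three, Finsupp.single_apply] at h0 h1 ⊢ <;> omega

open MvPolynomial in
theorem sc_const (P : MvPolynomial (Fin 3) ℝ) (h : ∀ i, pderiv i P = 0) : P = C (P.coeff 0) := by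
  classical
  ext m
  rw [coeff_C]
  split_ifs with hm
  · rw [hm]
  · obtain ⟨i, hi⟩ : ∃ i, m i ≠ 0 := by
      by_contra! hc
      exact hm (by ext j; simp [hc j])
    have e : m = (m - Finsupp.single i 1) + Finsupp.single i 1 := by
      ext j
      by_cases hj : i = j
      · subst hj; simp; omega
      · simp [hj]
    have h2 := coeff_pderiv (i := i) P (m - Finsupp.single i 1)
    rw [h i, ← e, coeff_zero] at h2
    rcases mul_eq_zero.mp h2.symm with h3 | h3
    · exact h3
    · exfalso
      have : (0 : ℝ) ≤ (((m - Finsupp.single i 1 : Fin 3 →₀ ℕ) i : ℕ) : ℝ) := Nat.cast_nonneg _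
      linarith

open MvPolynomial in
theorem sc_exists (S : Finset (ℝ × ℝ × ℝ)) (D : ℕ) (hD : S.card * (9 * D + 1) < (D + 1) ^ 3) :
    ∃ P : MvPolynomial (Fin 3) ℝ, P ≠ 0 ∧ P.totalDegree ≤ 3 * D ∧
      ∀ k ∈ S, ∀ t, eval (sc k t) P = 0 := by
  classical
  let ex : (Fin 3 → Fin (D + 1)) → (Fin 3 →₀ ℕ) := fun v => Finsupp.equivFunOnFinite.symm (fun i => (v i : ℕ))
  have hex : Function.Injective ex := by
    intro v w h
    have h' := Finsupp.equivFunOnFinite.symm.injective h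
    ext i
    exact congrFun h' i
  let Φ : ((Fin 3 → Fin (D + 1)) → ℝ) →ₗ[ℝ] MvPolynomial (Fin 3) ℝ :=
    ∑ v, (monomial (ex v)).comp (LinearMap.proj v)
  have hΦ : ∀ c, Φ c = ∑ v, monomial (ex v) (c v) := by
    intro c; simp [Φ]
  let Ψ : ((Fin 3 → Fin (D + 1)) → ℝ) →ₗ[ℝ] (S × Fin (9 * D + 1) → ℝ) :=
    LinearMap.pi (fun x => (aeval (R := ℝ) (sc x.1.1 ((x.2 : ℕ) : ℝ))).toLinearMap.comp Φ)
  have hker : LinearMap.ker Ψ ≠ ⊥ := by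
    apply LinearMap.ker_ne_bot_of_finrank_lt
    simpa using hD
  obtain ⟨c, hc, hc0⟩ := Submodule.exists_mem_ne_zero_of_ne_bot hker
  refine ⟨Φ c, ?_, ?_, ?_⟩
  · intro h0
    apply hc0
    ext v
    have := congrArg (coeff (ex v)) h0
    rw [hΦ, coeff_sum] at this
    simpa [coeff_monomial, hex.eq_iff] using this
  · rw [hΦ]
    apply totalDegree_finsetSum_le
    intro v _
    refine (totalDegree_monomial_le _ _).trans ?_
    rw [Finsupp.sum_fintype _ _ (by simp)]
    have := (v 0).2
    have := (v 1).2
    have := (v 2).2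
    simp [ex, Fin.sum_univ_three]
    omega
  · intro k hk t
    have hdeg : (Φ c).totalDegree ≤ 3 * D := by
      rw [hΦ]
      apply totalDegree_finsetSum_le
      intro v _
      refine (totalDegree_monomial_le _ _).trans ?_
      rw [Finsupp.sum_fintype _ _ (by simp)]
      have := (v 0).2
      have := (v 1).2
      have := (v 2).2
      simp [ex, Fin.sum_univ_three]
      omega
    refine sc_root k _ _ hdeg ((Finset.range (9 * D + 1)).image (fun n : ℕ => (n : ℝ))) ?_ ?_ t
    · rw [Finset.card_image_of_injective _ Nat.cast_injective, Finset.card_range]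
      omega
    · intro s hs
      obtain ⟨n, hn, rfl⟩ := Finset.mem_image.mp hs
      have := congrFun (LinearMap.mem_ker.mp hc) (⟨k, hk⟩, ⟨n, Finset.mem_range.mp hn⟩)
      simpa [Ψ, aeval_eq_eval] using this

open MvPolynomial in
theorem sc_tang (k k' : ℝ × ℝ × ℝ) (P : MvPolynomial (Fin 3) ℝ)
    (h : ∀ t, eval (sc k t) P = 0) (h' : ∀ t, eval (sc k' t) P = 0)
    (t : ℝ) (hkk : sc k t = sc k' t) (hr : k.2.2 ≠ k'.2.2) :
    eval (sc k t) (pderiv 2 P) = 0 ∧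
    eval (sc k t) (C (-2) * X 2 * pderiv 0 P + (1 - X 2 ^ 2) * pderiv 1 P) = 0 := by
  have hp : (1 + t ^ 2) ≠ 0 := by positivity
  have d := sc_hasDerivAt k P t
  have d' := sc_hasDerivAt k' P t
  rw [← hkk] at d'
  have z : (fun t => eval (sc k t) P) = fun _ => 0 := funext h
  have z' : (fun t => eval (sc k' t) P) = fun _ => 0 := funext h'
  rw [z] at d
  rw [z'] at d'
  have e := d.unique (hasDerivAt_const t 0)
  have e' := d'.unique (hasDerivAt_const t 0)
  have ht : sc k t 2 = t := rfl
  simp only [map_add, map_mul, map_sub, map_one, map_pow, eval_C, eval_X, ht]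
  generalize eval (sc k t) (pderiv 0 P) = A at *
  generalize eval (sc k t) (pderiv 1 P) = B at *
  generalize eval (sc k t) (pderiv 2 P) = G at *
  have hW : (-4 * t / (1 + t ^ 2) ^ 2) * A + (2 * (1 - t ^ 2) / (1 + t ^ 2) ^ 2) * B = 0 := by
    have : (k.2.2 - k'.2.2) * ((-4 * t / (1 + t ^ 2) ^ 2) * A + (2 * (1 - t ^ 2) / (1 + t ^ 2) ^ 2) * B) = 0 := by
      linear_combination e - e'
    exact (mul_eq_zero.mp this).resolve_left (sub_ne_zero.mpr hr)
  constructor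
  · linear_combination e - k.2.2 * hW
  · field_simp at hW
    linear_combination hW / 2

open MvPolynomial in
theorem sc_main (S : Finset (ℝ × ℝ × ℝ)) (D : ℕ) (hS : S.Nonempty)
    (hD : S.card * (9 * D + 1) < (D + 1) ^ 3)
    (hT : ∀ k ∈ S, ∃ s : Finset ℝ, 9 * D + 3 < s.card ∧
      ∀ t ∈ s, ∃ k' ∈ S, sc k t = sc k' t ∧ k.2.2 ≠ k'.2.2) : False := by
  classical
  let V : MvPolynomial (Fin 3) ℝ → Prop := fun P => ∀ k ∈ S, ∀ t, eval (sc k t) P = 0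
  have hex : ∃ d, ∃ P : MvPolynomial (Fin 3) ℝ, P ≠ 0 ∧ P.totalDegree = d ∧ d ≤ 3 * D ∧ V P := by
    obtain ⟨P, h0, hd, hv⟩ := sc_exists S D hD
    exact ⟨_, P, h0, rfl, hd, hv⟩
  obtain ⟨P, hP0, hPd, hPD, hPV⟩ := Nat.find_spec hex
  have hmin : ∀ Q, Q.totalDegree ≤ P.totalDegree - 1 → V Q → Q ≠ 0 → P.totalDegree = 0 := by
    intro Q hQ hV h0
    by_contra hne
    exact Nat.find_min hex (m := Q.totalDegree) (by omega) ⟨Q, h0, rfl, by omega, hV⟩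
  have hc2 : ∀ Q : MvPolynomial (Fin 3) ℝ, Q.totalDegree ≤ 3 * D + 1 → V Q → V (pderiv 2 Q) := by
    intro Q hQ hV k hk
    obtain ⟨s, hs, hst⟩ := hT k hk
    refine sc_root k _ (3 * D + 1) ((sc_deg Q 2).trans (by omega)) s (by omega) ?_
    intro t ht
    obtain ⟨k', hk', he, hr⟩ := hst t ht
    exact (sc_tang k k' Q (hV k hk) (hV k' hk') t he hr).1
  have hder : ∀ i, V (pderiv i P) → pderiv i P = 0 := by
    intro i hv
    by_contra hne
    have h0 := hmin _ (sc_deg P i) hv hne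
    rw [totalDegree_eq_zero_iff_eq_C] at h0
    rw [h0] at hne
    simp at hne
  have h2 : pderiv 2 P = 0 := hder 2 (hc2 P (by omega) hPV)
  let Q : MvPolynomial (Fin 3) ℝ := C (-2) * X 2 * pderiv 0 P + (1 - X 2 ^ 2) * pderiv 1 P
  by_cases hdeg : P.totalDegree = 0
  · rw [totalDegree_eq_zero_iff_eq_C] at hdeg
    obtain ⟨k, hk⟩ := hS
    have := hPV k hk 0
    rw [hdeg, eval_C] at this
    rw [this] at hdeg
    exact hP0 (by simpa using hdeg)
  have hQd : Q.totalDegree ≤ 3 * D + 1 := by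
    have a0 := sc_deg P 0
    have a1 := sc_deg P 1
    have b0 : (C (-2) * X 2 : MvPolynomial (Fin 3) ℝ).totalDegree ≤ 2 := by
      refine (totalDegree_mul _ _).trans ?_
      simp
    have b1 : (1 - X 2 ^ 2 : MvPolynomial (Fin 3) ℝ).totalDegree ≤ 2 := by
      refine (totalDegree_sub _ _).trans ?_
      simp
    refine (totalDegree_add _ _).trans (max_le ?_ ?_)
    · refine (totalDegree_mul _ _).trans ?_
      omega
    · refine (totalDegree_mul _ _).trans ?_
      omega
  have hQV : V Q := by
    intro k hk
    obtain ⟨s, hs, hst⟩ := hT k hk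
    refine sc_root k _ (3 * D + 1) hQd s (by omega) ?_
    intro t ht
    obtain ⟨k', hk', he, hr⟩ := hst t ht
    exact (sc_tang k k' P (hPV k hk) (hPV k' hk') t he hr).2
  have c0 : pderiv 2 (pderiv 0 P) = 0 := by rw [sc_pderiv_comm, h2, map_zero]
  have c1 : pderiv 2 (pderiv 1 P) = 0 := by rw [sc_pderiv_comm, h2, map_zero]
  have e1 : pderiv 2 Q = C (-2) * pderiv 0 P + C (-2) * X 2 * pderiv 1 P := by
    simp only [Q, map_add, map_sub, pderiv_mul, pderiv_pow, c0, c1, pderiv_C, pderiv_one, pderiv_X_self]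
    have : (C (-2) : MvPolynomial (Fin 3) ℝ) = -2 := by
      rw [C_neg]; rfl
    rw [this]
    push_cast
    ring
  have hQ1 := hc2 Q hQd hQV
  have e2 : pderiv 2 (pderiv 2 Q) = C (-2) * pderiv 1 P := by
    rw [e1]
    simp only [map_add, pderiv_mul, c0, c1, pderiv_C, pderiv_X_self]
    simp
  have hQ2 := hc2 _ ((sc_deg Q 2).trans (by omega)) hQ1
  rw [e2] at hQ2
  rw [e1] at hQ1
  have v1 : V (pderiv 1 P) := by
    intro k hk t
    have := hQ2 k hk t
    simpa using this
  have h1 := hder 1 v1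
  have v0 : V (pderiv 0 P) := by
    intro k hk t
    have := hQ1 k hk t
    simpa [h1] using this
  have h0 := hder 0 v0
  have hC := sc_const P (by intro i; fin_cases i <;> assumption)
  exact hdeg (totalDegree_eq_zero_iff_eq_C.mpr hC)

theorem sc_mem (a p : Pt2) (r : ℝ) (hr : 0 < r) :
    p ∈ Metric.sphere a r ↔ (p 0 - a 0) ^ 2 + (p 1 - a 1) ^ 2 = r ^ 2 := by
  rw [Metric.mem_sphere, EuclideanSpace.dist_eq, Fin.sum_univ_two, Real.dist_eq, Real.dist_eq,
    sq_abs, sq_abs, Real.sqrt_eq_iff_mul_self_eq_of_pos hr, sq r]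
  exact eq_comm

theorem sc_touch (a a' p : Pt2) (r r' : ℝ) (hr : 0 < r) (hr' : 0 < r')
    (hne : Metric.sphere a r ≠ Metric.sphere a' r')
    (h : Metric.sphere a r ∩ Metric.sphere a' r' = {p}) :
    ∃ μ : ℝ, μ ≠ 1 ∧ p 0 - a' 0 = μ * (p 0 - a 0) ∧ p 1 - a' 1 = μ * (p 1 - a 1) ∧
      (μ * r = r' ∨ μ * r = -r') := by
  have hp : p ∈ Metric.sphere a r ∩ Metric.sphere a' r' := by rw [h]; rfl
  have h1 := (sc_mem a p r hr).mp hp.1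
  have h2 := (sc_mem a' p r' hr').mp hp.2
  have hd : (a' 0 - a 0) ^ 2 + (a' 1 - a 1) ^ 2 ≠ 0 := by
    intro h0
    have e0 : a' 0 = a 0 := by nlinarith [sq_nonneg (a' 0 - a 0), sq_nonneg (a' 1 - a 1)]
    have e1 : a' 1 = a 1 := by nlinarith [sq_nonneg (a' 0 - a 0), sq_nonneg (a' 1 - a 1)]
    have ea : a' = a := by
      ext i; fin_cases i
      · exact e0
      · exact e1
    have er : r = r' := by
      rw [e0, e1, h1] at h2
      nlinarith
    exact hne (by rw [ea, er])
  obtain ⟨l, hl⟩ : ∃ l, l = ((p 0 - a 0) * (a' 0 - a 0) + (p 1 - a 1) * (a' 1 - a 1)) /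
    ((a' 0 - a 0) ^ 2 + (a' 1 - a 1) ^ 2) := ⟨_, rfl⟩
  have hl' : l * ((a' 0 - a 0) ^ 2 + (a' 1 - a 1) ^ 2) =
      (p 0 - a 0) * (a' 0 - a 0) + (p 1 - a 1) * (a' 1 - a 1) := by
    rw [hl]; field_simp
  let q : Pt2 := !₂[a 0 + 2 * l * (a' 0 - a 0) - (p 0 - a 0), a 1 + 2 * l * (a' 1 - a 1) - (p 1 - a 1)]
  have q0 : q 0 = a 0 + 2 * l * (a' 0 - a 0) - (p 0 - a 0) := rfl
  have q1 : q 1 = a 1 + 2 * l * (a' 1 - a 1) - (p 1 - a 1) := rfl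
  have hq : q ∈ Metric.sphere a r ∩ Metric.sphere a' r' := by
    constructor
    · rw [sc_mem _ _ _ hr, q0, q1, ← h1]
      linear_combination 4 * l * hl'
    · rw [sc_mem _ _ _ hr', q0, q1, ← h2]
      linear_combination (4 * l - 4) * hl'
  have hqp : q = p := by
    rw [h] at hq
    exact hq
  rw [hqp] at q0 q1
  have w0 : p 0 - a 0 = l * (a' 0 - a 0) := by linarith
  have w1 : p 1 - a 1 = l * (a' 1 - a 1) := by linarith
  have hl0 : l ≠ 0 := by
    rintro rfl
    rw [w0, w1] at h1
    nlinarith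
  have m0 : p 0 - a' 0 = (l - 1) / l * (p 0 - a 0) := by
    rw [w0]; field_simp; linarith
  have m1 : p 1 - a' 1 = (l - 1) / l * (p 1 - a 1) := by
    rw [w1]; field_simp; linarith
  refine ⟨(l - 1) / l, ?_, m0, m1, ?_⟩
  · intro h
    rw [div_eq_one_iff_eq hl0] at h
    linarith
  · apply sq_eq_sq_iff_eq_or_eq_neg.mp
    rw [m0, m1] at h2
    rw [mul_pow, ← h1, ← h2]
    ring

theorem sc_lift (a b ρ x y t : ℝ) (h : (x - a) ^ 2 + (y - b) ^ 2 = ρ ^ 2)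
    (hn : ρ + (x - a) ≠ 0) (ht : t = (y - b) / (ρ + (x - a))) :
    sc (a, b, ρ) t = ![x, y, t] := by
  have h0 : (ρ + (x - a)) ^ 2 + (y - b) ^ 2 = 2 * ρ * (ρ + (x - a)) := by
    linear_combination h
  have hρ : ρ ≠ 0 := by
    rintro rfl
    have : 0 < (0 + (x - a)) ^ 2 := by positivity
    nlinarith [sq_nonneg (y - b)]
  obtain ⟨X, hX⟩ : ∃ X, X = ρ + (x - a) := ⟨_, rfl⟩
  obtain ⟨Y, hY⟩ : ∃ Y, Y = y - b := ⟨_, rfl⟩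
  have ex : x = a + X - ρ := by linarith
  have ey : y = b + Y := by linarith
  rw [← hX] at hn ht h0
  rw [← hY] at ht h0
  have hden : 1 + t ^ 2 = 2 * ρ / X := by
    rw [ht]; field_simp; linarith
  have e1 : ρ * ((1 - t ^ 2) / (1 + t ^ 2)) = X - ρ := by
    have : 1 - t ^ 2 = 2 - 2 * ρ / X := by linarith
    rw [hden, this]
    field_simp
  have e2 : ρ * (2 * t / (1 + t ^ 2)) = Y := by
    rw [hden, ht]
    field_simp
  simp only [sc, e1, e2, ex, ey]
  congr 1
  ring

def scT (S : Finset (Set Pt2)) (c : Set Pt2) : Set Pt2 :=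
  {p | ∃ c' ∈ S, c ≠ c' ∧ c ∩ c' = {p}}

theorem scT_finite (S : Finset (Set Pt2)) (c : Set Pt2) : (scT S c).Finite := by
  classical
  have : scT S c ⊆ ⋃ c' ∈ S, {p | c ∩ c' = {p}} := by
    rintro p ⟨c', h1, _, h3⟩
    simp only [Set.mem_iUnion]
    exact ⟨c', h1, h3⟩
  refine Set.Finite.subset (Set.Finite.biUnion S.finite_toSet ?_) this
  intro c' _
  apply Set.Subsingleton.finite
  intro p hp q hq
  have h1 : c ∩ c' = {p} := hp
  have h2 : c ∩ c' = {q} := hq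
  rw [h1] at h2
  exact Set.singleton_injective h2

theorem sc_low (S : Finset (Set Pt2)) (hS : S.Nonempty) (hc : ∀ s ∈ S, IsCircle2 s) (D : ℕ)
    (hD : 2 * S.card * (9 * D + 1) < (D + 1) ^ 3) :
    ∃ c ∈ S, (scT S c).ncard ≤ 9 * D + 4 := by
  classical
  by_contra! hcon
  choose! a r hr hs using hc
  let F : Finset (ℝ × ℝ × ℝ) :=
    S.image (fun s => (a s 0, a s 1, r s)) ∪ S.image (fun s => (a s 0, a s 1, -r s))
  have hmem : ∀ k, k ∈ F ↔ ∃ s ∈ S, k.1 = a s 0 ∧ k.2.1 = a s 1 ∧ (k.2.2 = r s ∨ k.2.2 = -r s) := by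
    rintro ⟨x, y, z⟩
    simp only [F, Finset.mem_union, Finset.mem_image, Prod.mk.injEq]
    constructor
    · rintro (⟨s, h1, h2, h3, h4⟩ | ⟨s, h1, h2, h3, h4⟩)
      · exact ⟨s, h1, h2.symm, h3.symm, Or.inl h4.symm⟩
      · exact ⟨s, h1, h2.symm, h3.symm, Or.inr h4.symm⟩
    · rintro ⟨s, h1, h2, h3, h4 | h4⟩
      · exact Or.inl ⟨s, h1, h2.symm, h3.symm, h4.symm⟩
      · exact Or.inr ⟨s, h1, h2.symm, h3.symm, h4.symm⟩
  have hcard : F.card ≤ 2 * S.card := by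
    refine (Finset.card_union_le _ _).trans ?_
    have h1 := Finset.card_image_le (s := S) (f := fun s => (a s 0, a s 1, r s))
    have h2 := Finset.card_image_le (s := S) (f := fun s => (a s 0, a s 1, -r s))
    omega
  have hne : F.Nonempty := by
    obtain ⟨s, h⟩ := hS
    exact ⟨_, (hmem (a s 0, a s 1, r s)).mpr ⟨s, h, rfl, rfl, Or.inl rfl⟩⟩
  refine sc_main F D hne (lt_of_le_of_lt (Nat.mul_le_mul_right _ hcard) hD) ?_
  rintro ⟨x, y, z⟩ hk
  obtain ⟨s, hsS, h1, h2, h3⟩ := (hmem _).mp hk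
  simp only at h1 h2 h3
  have hz2 : z ^ 2 = r s ^ 2 := by rcases h3 with h | h <;> rw [h] <;> ring
  have hz0 : z ≠ 0 := by
    have := hr s hsS
    rcases h3 with h | h <;> rw [h] <;> linarith
  have hon : ∀ p ∈ scT S s, (p 0 - x) ^ 2 + (p 1 - y) ^ 2 = z ^ 2 := by
    rintro p ⟨c', hc', hn, hi⟩
    have : p ∈ s ∩ c' := by rw [hi]; rfl
    have h4 := this.1
    rw [hs s hsS, sc_mem _ _ _ (hr s hsS)] at h4
    rw [hz2, h1, h2, h4]
  let T := (scT_finite S s).toFinset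
  have hTc : 9 * D + 4 < T.card := by
    have := hcon s hsS
    rwa [Set.ncard_eq_toFinset_card _ (scT_finite S s)] at this
  let T' := T.erase (!₂[x - z, y] : Pt2)
  have hT'c : 9 * D + 3 < T'.card := by
    have := Finset.pred_card_le_card_erase (s := T) (a := (!₂[x - z, y] : Pt2))
    simp only [T']
    omega
  have hT' : ∀ p ∈ T', p ∈ scT S s ∧ z + (p 0 - x) ≠ 0 := by
    intro p hp
    have hp' := Finset.mem_erase.mp hp
    have hpT : p ∈ scT S s := (scT_finite S s).mem_toFinset.mp hp'.2
    refine ⟨hpT, ?_⟩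
    intro h0
    apply hp'.1
    have e := hon p hpT
    have e0 : p 0 = x - z := by linarith
    have e1 : p 1 = y := by
      rw [e0] at e
      have : (p 1 - y) ^ 2 = 0 := by linear_combination e
      have := pow_eq_zero_iff (two_ne_zero) |>.mp this
      linarith
    ext i; fin_cases i
    · exact e0
    · exact e1
  let τ : Pt2 → ℝ := fun p => (p 1 - y) / (z + (p 0 - x))
  have hlift : ∀ p ∈ T', sc (x, y, z) (τ p) = ![p 0, p 1, τ p] := by
    intro p hp
    exact sc_lift x y z (p 0) (p 1) (τ p) (hon p (hT' p hp).1) (hT' p hp).2 rfl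
  refine ⟨T'.image τ, ?_, ?_⟩
  · rw [Finset.card_image_of_injOn]
    · exact hT'c
    · intro p hp q hq hpq
      have e := hlift p hp
      have e' := hlift q hq
      rw [hpq, e'] at e
      have e0 : q 0 = p 0 := congrFun e 0
      have e1 : q 1 = p 1 := congrFun e 1
      ext i; fin_cases i
      · exact e0.symm
      · exact e1.symm
  · intro t ht
    obtain ⟨p, hp, rfl⟩ := Finset.mem_image.mp ht
    obtain ⟨⟨c', hc', hn, hi⟩, hnz⟩ := hT' p hp
    rw [hs s hsS, hs c' hc'] at hi hn
    obtain ⟨μ, hμ, m0, m1, hm⟩ := sc_touch _ _ p _ _ (hr s hsS) (hr c' hc') hn hi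
    rw [← h1] at m0
    rw [← h2] at m1
    have hμ0 : μ ≠ 0 := by
      rintro rfl
      have := hr c' hc'
      rcases hm with h | h <;> linarith
    refine ⟨(a c' 0, a c' 1, μ * z), (hmem _).mpr ⟨c', hc', rfl, rfl, ?_⟩, ?_, ?_⟩
    · simp only
      rcases h3 with h | h <;> rcases hm with h' | h'
      · left; rw [h, h']
      · right; rw [h, h']
      · right; rw [h, ← h']; ring
      · left; rw [h]; linarith
    · rw [hlift p hp]
      symm
      have hs' : μ * z + (p 0 - a c' 0) = μ * (z + (p 0 - x)) := by rw [m0]; ring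
      apply sc_lift
      · rw [m0, m1]
        linear_combination μ ^ 2 * hon p (hT' p hp).1
      · rw [hs']
        exact mul_ne_zero hμ0 hnz
      · rw [hs', m1]
        simp only [τ]
        rw [mul_div_mul_left _ _ hμ0]
    · simp only
      intro h
      apply hμ
      have : (μ - 1) * z = 0 := by linear_combination -h
      have := (mul_eq_zero.mp this).resolve_right hz0
      linarith

theorem sc_count (D N : ℕ) (hD : 2 * N * (9 * D + 1) < (D + 1) ^ 3) (n : ℕ) :
    ∀ S : Finset (Set Pt2), S.card = n → n ≤ N → (∀ s ∈ S, IsCircle2 s) →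
      ({p : Pt2 | ∃ c1 ∈ S, ∃ c2 ∈ S, c1 ≠ c2 ∧ c1 ∩ c2 = {p}}).ncard ≤ n * (9 * D + 4) := by
  classical
  induction n with
  | zero =>
    intro S h _ _
    rw [Finset.card_eq_zero] at h
    simp [h]
  | succ n ih =>
    intro S h hN hc
    have hne : S.Nonempty := Finset.card_pos.mp (by omega)
    obtain ⟨c, hcS, hlow⟩ := sc_low S hne hc D (lt_of_le_of_lt
      (Nat.mul_le_mul_right _ (Nat.mul_le_mul_left _ (by omega))) hD)
    have hi := ih (S.erase c) (by rw [Finset.card_erase_of_mem hcS]; omega) (by omega)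
      (fun s hs => hc s (Finset.mem_of_mem_erase hs))
    have hfin : ({p : Pt2 | ∃ c1 ∈ S.erase c, ∃ c2 ∈ S.erase c, c1 ≠ c2 ∧ c1 ∩ c2 = {p}}).Finite := by
      refine Set.Finite.subset (Set.Finite.biUnion S.finite_toSet (fun c _ => scT_finite S c)) ?_
      rintro p ⟨c1, h1, c2, h2, h3, h4⟩
      simp only [Set.mem_iUnion]
      exact ⟨c1, Finset.mem_of_mem_erase h1, c2, Finset.mem_of_mem_erase h2, h3, h4⟩
    have hsub : {p : Pt2 | ∃ c1 ∈ S, ∃ c2 ∈ S, c1 ≠ c2 ∧ c1 ∩ c2 = {p}} ⊆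
        {p : Pt2 | ∃ c1 ∈ S.erase c, ∃ c2 ∈ S.erase c, c1 ≠ c2 ∧ c1 ∩ c2 = {p}} ∪ scT S c := by
      rintro p ⟨c1, h1, c2, h2, h3, h4⟩
      by_cases e1 : c1 = c
      · subst e1
        exact Or.inr ⟨c2, h2, h3, h4⟩
      by_cases e2 : c2 = c
      · subst e2
        exact Or.inr ⟨c1, h1, h3.symm, by rw [Set.inter_comm]; exact h4⟩
      · exact Or.inl ⟨c1, Finset.mem_erase.mpr ⟨e1, h1⟩, c2, Finset.mem_erase.mpr ⟨e2, h2⟩, h3, h4⟩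
    have u1 := Set.ncard_le_ncard hsub (hfin.union (scT_finite S c))
    have u2 := Set.ncard_union_le {p : Pt2 | ∃ c1 ∈ S.erase c, ∃ c2 ∈ S.erase c, c1 ≠ c2 ∧ c1 ∩ c2 = {p}} (scT S c)
    rw [Nat.succ_mul]
    omega

theorem circle_tangency_points :
    ∃ A : ℝ, 0 < A ∧
      ∀ (n : ℕ) (C : Finset (Set Pt2)),
        C.card = n → (∀ s ∈ C, IsCircle2 s) →
        (({p : Pt2 | ∃ c1 ∈ C, ∃ c2 ∈ C, c1 ≠ c2 ∧ c1 ∩ c2 = {p}}).ncard : ℝ) ≤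
          A * (n : ℝ) ^ ((3 : ℝ) / 2) := by
  refine ⟨100, by norm_num, ?_⟩
  intro n C hn hC
  rcases Nat.eq_zero_or_pos n with h0 | hpos
  · subst h0
    rw [Finset.card_eq_zero] at hn
    simp [hn]
  · let m := Nat.sqrt n
    have hm1 : n < (m + 1) * (m + 1) := Nat.lt_succ_sqrt n
    have hm2 : m * m ≤ n := Nat.sqrt_le n
    have hm0 : 1 ≤ m := Nat.sqrt_pos.mpr hpos
    have key := sc_count (5 * m + 4) n (by
      have : 2 * n * (9 * (5 * m + 4) + 1) ≤ 2 * ((m + 1) * (m + 1)) * (9 * (5 * m + 4) + 1) := by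
        gcongr
      nlinarith) n C hn le_rfl hC
    have k2 : (({p : Pt2 | ∃ c1 ∈ C, ∃ c2 ∈ C, c1 ≠ c2 ∧ c1 ∩ c2 = {p}}).ncard : ℝ) ≤
        n * (9 * (5 * m + 4) + 4) := by exact_mod_cast key
    have hms : (m : ℝ) ≤ Real.sqrt n := by
      apply Real.le_sqrt_of_sq_le
      rw [sq]
      exact_mod_cast hm2
    have hm1' : (1 : ℝ) ≤ m := by exact_mod_cast hm0
    have hpow : (n : ℝ) ^ ((3 : ℝ) / 2) = n * Real.sqrt n := by
      have hn0 : (0 : ℝ) < n := by exact_mod_cast hpos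
      rw [Real.sqrt_eq_rpow, show (3 : ℝ) / 2 = 1 + 1 / 2 by norm_num, Real.rpow_add hn0, Real.rpow_one]
    rw [hpow]
    refine k2.trans ?_
    have : (9 * (5 * (m : ℝ) + 4) + 4) ≤ 100 * Real.sqrt n := by linarith
    calc (n : ℝ) * (9 * (5 * m + 4) + 4) ≤ n * (100 * Real.sqrt n) := by gcongr
      _ = _ := by ring
end
end

section
/- There exists an absolute constant A > 0 such that the following holds. Let C be a family of n circles in ℝ² (with arbitrary radii) such that no three circles of C are mutually tangent at a common point (i.e., there is no point p and three distinct circles of C that are pairwise tangent with p as the common tangency point). Then the number of unordered pairs of tangent circles of C is at most A · n^{3/2}. -/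
noncomputable section

/-- Two subsets of the plane are tangent if they intersect in exactly one point. -/
def Tangent2 (a b : Set Pt2) : Prop := ∃ p : Pt2, a ∩ b = {p}

def wt3 (m : Fin 3 →₀ ℕ) : ℕ := m 0 + 2 * m 1 + m 2

def WLt (P : MvPolynomial (Fin 3) ℝ) (E : ℕ) : Prop :=
  ∀ m, E ≤ wt3 m → MvPolynomial.coeff m P = 0

def DX (P : MvPolynomial (Fin 3) ℝ) : MvPolynomial (Fin 3) ℝ :=
  MvPolynomial.pderiv 0 P + MvPolynomial.C 2 * (MvPolynomial.X 2 * MvPolynomial.pderiv 1 P)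

lemma WLt_DY {P : MvPolynomial (Fin 3) ℝ} {E : ℕ} (h : WLt P (E+1)) :
    WLt (MvPolynomial.pderiv 2 P) E := by
  intro m hm
  rw [MvPolynomial.coeff_pderiv, h, zero_mul]
  simp [wt3] at hm ⊢
  omega

lemma WLt_DX {P : MvPolynomial (Fin 3) ℝ} {E : ℕ} (h : WLt P (E+1)) :
    WLt (DX P) E := by
  intro m hm
  rw [DX, MvPolynomial.coeff_add, MvPolynomial.coeff_C_mul, MvPolynomial.coeff_X_mul',
    MvPolynomial.coeff_pderiv, h]
  · split_ifs with h2
    · rw [MvPolynomial.coeff_pderiv, h]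
      · simp
      · simp [wt3] at hm h2 ⊢
        omega
    · simp
  · simp [wt3] at hm ⊢
    omega

open Polynomial in
def cv (s : ℝ × ℝ × ℝ) : Fin 3 → ℝ[X] :=
  ![X, C s.1 * (1 - X^2) + C (2 * s.2.1) * X - C s.2.2 * (1 + X^2),
    C s.2.1 - C (s.1 + s.2.2) * X]

open Polynomial in
def res (s : ℝ × ℝ × ℝ) (P : MvPolynomial (Fin 3) ℝ) : ℝ[X] :=
  MvPolynomial.aeval (cv s) P

lemma res_deriv (s : ℝ × ℝ × ℝ) (P : MvPolynomial (Fin 3) ℝ) :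
    Polynomial.derivative (res s P) =
      res s (DX P) + Polynomial.C (-(s.1 + s.2.2)) * res s (MvPolynomial.pderiv 2 P) := by
  induction P using MvPolynomial.induction_on with
  | C a => simp [res, DX]
  | add p q hp hq =>
    simp only [res, DX, map_add, mul_add] at *
    rw [hp, hq]; ring
  | mul_X p i hp =>
    simp only [res, DX, map_add, map_mul, Polynomial.derivative_mul, MvPolynomial.pderiv_mul, MvPolynomial.aeval_X, MvPolynomial.pderiv_X] at *
    rw [hp]
    have e2 : MvPolynomial.aeval (cv s) (MvPolynomial.C 2 : MvPolynomial (Fin 3) ℝ) = 2 := by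
      rw [MvPolynomial.aeval_C]; exact map_ofNat _ 2
    have c2 : (Polynomial.C 2 : Polynomial ℝ) = 2 := map_ofNat _ 2
    rw [e2]
    fin_cases i <;> simp [cv, c2] <;> ring

lemma cv_deg (s : ℝ × ℝ × ℝ) (m : Fin 3 →₀ ℕ) (c : ℝ) :
    (res s (MvPolynomial.monomial m c)).natDegree ≤ wt3 m := by
  have h0 : (cv s 0).natDegree ≤ 1 := by simp [cv]
  have h1 : (cv s 1).natDegree ≤ 2 := by
    simp only [cv, Matrix.cons_val]
    compute_degree
  have h2 : (cv s 2).natDegree ≤ 1 := by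
    simp only [cv, Matrix.cons_val]
    compute_degree
  rw [res, MvPolynomial.aeval_monomial, Finsupp.prod_fintype _ _ (by simp), Fin.prod_univ_three]
  refine (Polynomial.natDegree_C_mul_le _ _).trans ?_
  refine Polynomial.natDegree_mul_le.trans ?_
  refine (add_le_add_left Polynomial.natDegree_mul_le _).trans ?_
  have a0 := Polynomial.natDegree_pow_le_of_le (m 0) h0
  have a1 := Polynomial.natDegree_pow_le_of_le (m 1) h1
  have a2 := Polynomial.natDegree_pow_le_of_le (m 2) h2
  simp only [wt3]; omega

lemma res_deg (s : ℝ × ℝ × ℝ) {P : MvPolynomial (Fin 3) ℝ} {E : ℕ} (h : WLt P E) :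
    (res s P).degree < E := by
  rw [P.as_sum, res, map_sum, ← Polynomial.mem_degreeLT]
  refine Submodule.sum_mem _ fun m hm => ?_
  have : wt3 m < E := by
    by_contra hc
    exact (MvPolynomial.mem_support_iff.mp hm) (h m (not_lt.mp hc))
  rw [Polynomial.mem_degreeLT]
  refine lt_of_le_of_lt Polynomial.degree_le_natDegree ?_
  exact_mod_cast lt_of_le_of_lt (cv_deg s m _) this

lemma res_zero (s : ℝ × ℝ × ℝ) {P : MvPolynomial (Fin 3) ℝ} {E : ℕ} (h : WLt P E)
    (T : Finset ℝ) (hT : E ≤ T.card) (hz : ∀ t ∈ T, (res s P).eval t = 0) : res s P = 0 :=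
  Polynomial.eq_zero_of_degree_lt_of_eval_finset_eq_zero T
    (lt_of_lt_of_le (res_deg s h) (by exact_mod_cast hT)) hz

lemma res_eval (s : ℝ × ℝ × ℝ) (P : MvPolynomial (Fin 3) ℝ) (t : ℝ) :
    (res s P).eval t = MvPolynomial.eval (fun i => (cv s i).eval t) P := by
  rw [res, MvPolynomial.aeval_def, ← Polynomial.coe_evalRingHom, MvPolynomial.hom_eval₂,
    MvPolynomial.eval, MvPolynomial.coe_eval₂Hom]
  congr 1
  ext x; simp

lemma exists_P (S : Finset (ℝ × ℝ × ℝ)) (k : ℕ) (hk : S.card * (4 * k) < k ^ 3) :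
    ∃ P : MvPolynomial (Fin 3) ℝ, P ≠ 0 ∧ WLt P (4 * k) ∧ ∀ s ∈ S, res s P = 0 := by
  classical
  let ex : (Fin 3 → Fin k) → (Fin 3 →₀ ℕ) := fun f => Finsupp.equivFunOnFinite.symm (fun i => (f i : ℕ))
  have hex : Function.Injective ex := by
    intro f g h
    have := Finsupp.equivFunOnFinite.symm.injective h
    funext i
    exact Fin.ext (congrFun this i)
  let tp : ((Fin 3 → Fin k) → ℝ) →ₗ[ℝ] MvPolynomial (Fin 3) ℝ :=
    ∑ f, (MvPolynomial.monomial (ex f)).comp (LinearMap.proj f)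
  have htp : ∀ v, tp v = ∑ f, MvPolynomial.monomial (ex f) (v f) := by
    intro v; simp [tp]
  let ev : MvPolynomial (Fin 3) ℝ →ₗ[ℝ] (S × Fin (4*k) → ℝ) :=
    LinearMap.pi fun x => (Polynomial.leval (x.2 : ℝ)).comp (MvPolynomial.aeval (cv x.1.1)).toLinearMap
  have hdim : Module.finrank ℝ (S × Fin (4*k) → ℝ) < Module.finrank ℝ ((Fin 3 → Fin k) → ℝ) := by
    simpa using hk
  obtain ⟨v, hv, hv0⟩ := (LinearMap.ker (ev.comp tp)).ne_bot_iff.mp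
    (LinearMap.ker_ne_bot_of_finrank_lt (f := ev.comp tp) hdim)
  have hW : WLt (tp v) (4 * k) := by
    intro m hm
    rw [htp, MvPolynomial.coeff_sum]
    refine Finset.sum_eq_zero fun f _ => ?_
    rw [MvPolynomial.coeff_monomial, if_neg]
    rintro rfl
    have : wt3 (ex f) = (f 0 : ℕ) + 2 * (f 1 : ℕ) + f 2 := rfl
    have := (f 0).2; have := (f 1).2; have := (f 2).2
    omega
  refine ⟨tp v, ?_, hW, ?_⟩
  · intro h0
    apply hv0
    funext f
    have := congrArg (MvPolynomial.coeff (ex f)) h0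
    rw [htp, MvPolynomial.coeff_sum, Finset.sum_eq_single f] at this
    · simpa using this
    · intro g _ hg
      rw [MvPolynomial.coeff_monomial, if_neg]
      exact fun h => hg (hex h)
    · simp
  · intro s hs
    refine res_zero s hW (Finset.univ.image fun i : Fin (4*k) => (i : ℝ)) ?_ ?_
    · rw [Finset.card_image_of_injective]
      · simp
      · intro i j h
        simpa [Fin.ext_iff] using h
    · intro t ht
      simp only [Finset.mem_image, Finset.mem_univ, true_and] at ht
      obtain ⟨i, rfl⟩ := ht
      have := congrFun (LinearMap.mem_ker.mp hv) (⟨s, hs⟩, i)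
      simpa [ev, res] using this

def Touch (s s' : ℝ × ℝ × ℝ) (t : ℝ) : Prop :=
  (cv s 1).eval t = (cv s' 1).eval t ∧ (cv s 2).eval t = (cv s' 2).eval t ∧
    s.1 + s.2.2 ≠ s'.1 + s'.2.2

lemma touch_zero {s s' : ℝ × ℝ × ℝ} {t : ℝ} (h : Touch s s' t) (P : MvPolynomial (Fin 3) ℝ)
    (hs : res s P = 0) (hs' : res s' P = 0) :
    (res s (DX P)).eval t = 0 ∧ (res s (MvPolynomial.pderiv 2 P)).eval t = 0 := by
  obtain ⟨h1, h2, h3⟩ := h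
  have hp : (fun i => (cv s i).eval t) = (fun i => (cv s' i).eval t) := by
    funext i
    fin_cases i
    · simp [cv]
    · exact h1
    · exact h2
  have e1 := congrArg (Polynomial.eval t) (res_deriv s P)
  have e2 := congrArg (Polynomial.eval t) (res_deriv s' P)
  rw [hs] at e1
  rw [hs'] at e2
  simp only [Polynomial.derivative_zero, Polynomial.eval_zero, Polynomial.eval_add,
    Polynomial.eval_mul, Polynomial.eval_C, res_eval] at e1 e2 ⊢
  rw [← hp] at e2
  have : (MvPolynomial.eval (fun i => (cv s i).eval t) (MvPolynomial.pderiv 2 P)) = 0 := by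
    have : (s.1 + s.2.2 - (s'.1 + s'.2.2)) * (MvPolynomial.eval (fun i => (cv s i).eval t) (MvPolynomial.pderiv 2 P)) = 0 := by linarith
    exact (mul_eq_zero.mp this).resolve_left (sub_ne_zero.mpr h3)
  rw [this] at e1 ⊢
  simpa using e1.symm

lemma const_of_DX {P : MvPolynomial (Fin 3) ℝ} (hx : DX P = 0)
    (hy : MvPolynomial.pderiv 2 P = 0) : ∃ c, P = MvPolynomial.C c := by
  have h1 : MvPolynomial.pderiv 1 P = 0 := by
    have := congrArg (MvPolynomial.pderiv 2) hx
    have comm : ∀ i j : Fin 3, MvPolynomial.pderiv i (MvPolynomial.pderiv j P) = MvPolynomial.pderiv j (MvPolynomial.pderiv i P) := by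
      intro i j
      ext m
      simp only [MvPolynomial.coeff_pderiv]
      rw [add_right_comm]
      by_cases h : i = j
      · subst h; rfl
      · simp [h, Ne.symm h]; ring
    simp only [DX, map_add, MvPolynomial.pderiv_mul,
      MvPolynomial.pderiv_X_self, comm 2 0, comm 2 1, hy] at this
    simpa using this
  have h0 : MvPolynomial.pderiv 0 P = 0 := by simpa [DX, h1] using hx
  refine ⟨MvPolynomial.coeff 0 P, ?_⟩
  ext m
  rw [MvPolynomial.coeff_C]
  split_ifs with hm
  · rw [hm]
  · obtain ⟨i, hi⟩ : ∃ i, m i ≠ 0 := by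
      by_contra! hc
      exact hm (Finsupp.ext fun i => (hc i).symm)
    have hi0 : MvPolynomial.pderiv i P = 0 := by
      fin_cases i
      · exact h0
      · exact h1
      · exact hy
    have := congrArg (MvPolynomial.coeff (m - Finsupp.single i 1)) hi0
    rw [MvPolynomial.coeff_pderiv, tsub_add_cancel_of_le (by simpa using Nat.one_le_iff_ne_zero.mpr hi)] at this
    rw [MvPolynomial.coeff_zero] at this
    refine (mul_eq_zero.mp this).resolve_right ?_
    positivity

lemma core (S : Finset (ℝ × ℝ × ℝ)) (hS : S.Nonempty) (k : ℕ) (hk : S.card * (4 * k) < k ^ 3) :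
    ∃ s ∈ S, ∀ T : Finset ℝ, (∀ t ∈ T, ∃ s' ∈ S, Touch s s' t) → T.card ≤ 4 * k := by
  classical
  by_contra! hcon
  have hex : ∃ E, ∃ P : MvPolynomial (Fin 3) ℝ, P ≠ 0 ∧ WLt P E ∧ ∀ s ∈ S, res s P = 0 :=
    ⟨_, exists_P S k hk⟩
  obtain ⟨P, hP0, hW, hv⟩ := Nat.find_spec hex
  have hle : Nat.find hex ≤ 4 * k := Nat.find_min' hex (exists_P S k hk)
  have hmin := fun m => Nat.find_min hex (m := m)
  generalize Nat.find hex = E at *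
  cases E with
  | zero => exact hP0 (by ext m; simpa using hW m (Nat.zero_le _))
  | succ E =>
    have key : ∀ Q, WLt Q E → (∀ s ∈ S, ∀ s' ∈ S, ∀ t, Touch s s' t → (res s Q).eval t = 0) →
        Q = 0 := by
      intro Q hQ hz
      by_contra hne
      refine hmin E (Nat.lt_succ_self _) ⟨Q, hne, hQ, fun s hs => ?_⟩
      obtain ⟨T, hT, hc⟩ := hcon s hs
      refine res_zero s hQ T (by omega) fun t ht => ?_
      obtain ⟨s', hs', h⟩ := hT t ht
      exact hz s hs s' hs' t h
    have hx := key _ (WLt_DX hW) fun s hs s' hs' t h => (touch_zero h P (hv s hs) (hv s' hs')).1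
    have hy := key _ (WLt_DY hW) fun s hs s' hs' t h => (touch_zero h P (hv s hs) (hv s' hs')).2
    obtain ⟨c, rfl⟩ := const_of_DX hx hy
    obtain ⟨s, hs⟩ := hS
    have := hv s hs
    apply hP0
    simp [res] at this
    simp [this]

lemma mem_sph (c x : Pt2) (r : ℝ) (hr : 0 < r) :
    x ∈ Metric.sphere c r ↔ (x 0 - c 0)^2 + (x 1 - c 1)^2 = r^2 := by
  rw [Metric.mem_sphere, EuclideanSpace.dist_eq, Fin.sum_univ_two, Real.sqrt_eq_iff_mul_self_eq_of_pos hr,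
    Real.dist_eq, Real.dist_eq, sq_abs, sq_abs]
  constructor <;> intro h <;> linarith

/-- Algebraic tangency of circles at a point. -/
def ATan (c c' p : Pt2) : Prop :=
  (c 0 - p 0) * (c' 1 - p 1) = (c 1 - p 1) * (c' 0 - p 0) ∧ c ≠ c'

lemma geo1 {c c' p : Pt2} {r r' : ℝ} (hr : 0 < r) (hr' : 0 < r')
    (h : Metric.sphere c r ∩ Metric.sphere c' r' = {p}) : ATan c c' p := by
  have hp : p ∈ Metric.sphere c r ∩ Metric.sphere c' r' := by rw [h]; rfl
  have h1 := (mem_sph c p r hr).1 hp.1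
  have h2 := (mem_sph c' p r' hr').1 hp.2
  have hu : ∀ x : Pt2, (x 0 - c 0)^2 + (x 1 - c 1)^2 = r^2 →
      (x 0 - c' 0)^2 + (x 1 - c' 1)^2 = r'^2 → x = p := by
    intro x a b
    have : x ∈ Metric.sphere c r ∩ Metric.sphere c' r' := ⟨(mem_sph c x r hr).2 a, (mem_sph c' x r' hr').2 b⟩
    rw [h] at this
    exact this
  have hne : c ≠ c' := by
    rintro rfl
    have := hu !₂[2 * c 0 - p 0, 2 * c 1 - p 1] (by simp; linarith) (by simp; linarith)
    have e0 := congrArg (fun v : Pt2 => v 0) this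
    have e1 := congrArg (fun v : Pt2 => v 1) this
    simp at e0 e1
    have e0 : p 0 - c 0 = 0 := by linarith
    have e1 : p 1 - c 1 = 0 := by linarith
    rw [e0, e1] at h1
    have := pow_pos hr 2
    linarith
  refine ⟨?_, hne⟩
  set d0 := c' 0 - c 0 with hd0
  set d1 := c' 1 - c 1 with hd1
  have hd : d0^2 + d1^2 ≠ 0 := by
    intro hz
    apply hne
    have a0 : d0 = 0 := by nlinarith [sq_nonneg d0, sq_nonneg d1]
    have a1 : d1 = 0 := by nlinarith [sq_nonneg d0, sq_nonneg d1]
    ext i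
    fin_cases i
    · simp; linarith
    · simp; linarith
  set D := (p 0 - c 0) * d1 - (p 1 - c 1) * d0 with hD
  set l := D / (d0^2 + d1^2) with hl
  have hlD : l * (d0^2 + d1^2) = D := div_mul_cancel₀ _ hd
  have key := hu !₂[p 0 - 2 * l * d1, p 1 + 2 * l * d0] (by
    simp
    have : 4 * l * (l * (d0^2 + d1^2)) = 4 * l * D := by rw [hlD]
    rw [hD] at this
    nlinarith) (by
    simp
    have : 4 * l * (l * (d0^2 + d1^2)) = 4 * l * D := by rw [hlD]
    rw [hD] at this
    have e0 : c' 0 = c 0 + d0 := by rw [hd0]; ring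
    have e1 : c' 1 = c 1 + d1 := by rw [hd1]; ring
    rw [e0, e1] at h2 ⊢
    nlinarith)
  have e0 := congrArg (fun v : Pt2 => v 0) key
  have e1 := congrArg (fun v : Pt2 => v 1) key
  simp at e0 e1
  have hD0 : D = 0 := by
    rcases e0 with e0 | e0
    · rw [← hlD, e0]; ring
    · rcases e1 with e1 | e1
      · rw [← hlD, e1]; ring
      · exact absurd (by rw [e0, e1]; ring) hd
  rw [hD, hd0, hd1] at hD0
  linarith

lemma geo2 {c c' p : Pt2} {r r' : ℝ} (hr : 0 < r) (hr' : 0 < r')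
    (h1 : p ∈ Metric.sphere c r) (h2 : p ∈ Metric.sphere c' r') (h : ATan c c' p) :
    Metric.sphere c r ∩ Metric.sphere c' r' = {p} := by
  obtain ⟨hd, hne⟩ := h
  apply Set.eq_singleton_iff_unique_mem.2
  refine ⟨⟨h1, h2⟩, ?_⟩
  rintro x ⟨x1, x2⟩
  rw [mem_sph _ _ _ hr] at h1 x1
  rw [mem_sph _ _ _ hr'] at h2 x2
  set y0 := x 0 - p 0 with hy0
  set y1 := x 1 - p 1 with hy1
  set u0 := c 0 - p 0 with hu0
  set u1 := c 1 - p 1 with hu1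
  set v0 := c' 0 - p 0 with hv0
  set v1 := c' 1 - p 1 with hv1
  have a1 : u0^2 + u1^2 = r^2 := by rw [hu0, hu1]; linarith
  have a3 : y0^2 + y1^2 = 2 * (y0 * u0 + y1 * u1) := by
    rw [hu0, hu1, hy0, hy1]; linarith
  have a4 : y0^2 + y1^2 = 2 * (y0 * v0 + y1 * v1) := by
    rw [hv0, hv1, hy0, hy1]; linarith
  have hr2 : r^2 ≠ 0 := by positivity
  set m := (u0 * v0 + u1 * v1) / r^2 with hm
  have hmr : m * r^2 = u0 * v0 + u1 * v1 := div_mul_cancel₀ _ hr2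
  have b0 : v0 = m * u0 := by
    apply mul_right_cancel₀ hr2
    have : m * u0 * r^2 = u0 * (m * r^2) := by ring
    rw [this, hmr, ← a1]; linear_combination u1 * hd * (-1)
  have b1 : v1 = m * u1 := by
    apply mul_right_cancel₀ hr2
    have : m * u1 * r^2 = u1 * (m * r^2) := by ring
    rw [this, hmr, ← a1]; linear_combination u0 * hd
  have hm1 : 1 - m ≠ 0 := by
    intro hm0
    have : m = 1 := by linarith only [hm0]
    rw [this] at b0 b1
    apply hne
    ext i
    fin_cases i
    · simp; linarith
    · simp; linarith
  have hz : (1 - m) * (y0 * u0 + y1 * u1) = 0 := by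
    clear_value m y0 y1 u0 u1 v0 v1
    rw [b0, b1] at a4; linarith only [a3, a4]
  have hz := (mul_eq_zero.1 hz).resolve_left hm1
  rw [hz, mul_zero] at a3
  have z0 : y0 = 0 := by
    have : y0^2 = 0 := le_antisymm (by linarith only [a3, sq_nonneg y1]) (sq_nonneg y0)
    exact (pow_eq_zero_iff two_ne_zero).1 this
  have z1 : y1 = 0 := by
    have : y1^2 = 0 := le_antisymm (by linarith only [a3, sq_nonneg y0]) (sq_nonneg y1)
    exact (pow_eq_zero_iff two_ne_zero).1 this
  ext i
  fin_cases i
  · simp; linarith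
  · simp; linarith

/-- two circles tangent to a third one at the same point -/
lemma geo3 {c c' c'' p : Pt2} {r : ℝ} (hr : 0 < r)
    (h1 : p ∈ Metric.sphere c r) (h2 : ATan c c' p) (h3 : ATan c c'' p) (hne : c' ≠ c'') :
    ATan c' c'' p := by
  refine ⟨?_, hne⟩
  rw [mem_sph _ _ _ hr] at h1
  have hr2 : r^2 ≠ 0 := by positivity
  apply mul_right_cancel₀ hr2
  rw [← h1]
  obtain ⟨d2, _⟩ := h2
  obtain ⟨d3, _⟩ := h3
  linear_combination (-((c 0 - p 0) * (c'' 0 - p 0) + (c 1 - p 1) * (c'' 1 - p 1))) * d2 +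
    ((c 0 - p 0) * (c' 0 - p 0) + (c 1 - p 1) * (c' 1 - p 1)) * d3

lemma geo4 {c c' p : Pt2} {r r' ρ : ℝ} (hr : 0 < r) (hr' : 0 < r')
    (h1 : p ∈ Metric.sphere c r) (h2 : p ∈ Metric.sphere c' r') (h : ATan c c' p)
    (hρ : ρ^2 = r^2) (hinf : 1 + (c 0 - p 0) / ρ ≠ 0) :
    ∃ ρ', ρ'^2 = r'^2 ∧ Touch (c 0, c 1, ρ) (c' 0, c' 1, ρ')
      (((c 1 - p 1) / ρ) / (1 + (c 0 - p 0) / ρ)) := by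
  obtain ⟨hd, hne⟩ := h
  have hr2 : r^2 ≠ 0 := by positivity
  have hρ0 : ρ ≠ 0 := by rintro rfl; apply hr2; rw [← hρ]; ring
  rw [mem_sph _ _ _ hr] at h1
  rw [mem_sph _ _ _ hr'] at h2
  set e0 := (c 0 - p 0) / ρ with he0
  set e1 := (c 1 - p 1) / ρ with he1
  have f0 : c 0 = p 0 + ρ * e0 := by rw [he0]; field_simp; ring
  have f1 : c 1 = p 1 + ρ * e1 := by rw [he1]; field_simp; ring
  have he : e0^2 + e1^2 = 1 := by
    rw [he0, he1, div_pow, div_pow, hρ, ← add_div, div_eq_one_iff_eq hr2]; linarith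
  have hd' : e0 * (c' 1 - p 1) = e1 * (c' 0 - p 0) := by
    rw [f0, f1] at hd
    apply mul_left_cancel₀ hρ0
    linarith
  set ρ' := e0 * (c' 0 - p 0) + e1 * (c' 1 - p 1) with hρ'
  have g0 : c' 0 = p 0 + ρ' * e0 := by
    rw [hρ']; linear_combination (-(c' 0 - p 0)) * he - e1 * hd'
  have g1 : c' 1 = p 1 + ρ' * e1 := by
    rw [hρ']; linear_combination (-(c' 1 - p 1)) * he + e0 * hd'
  clear_value ρ' e0 e1
  refine ⟨ρ', ?_, ?_⟩
  · rw [← h2, g0, g1]; linear_combination (-ρ'^2) * he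
  set t := e1 / (1 + e0) with ht
  have ht' : t * (1 + e0) = e1 := div_mul_cancel₀ _ hinf
  clear_value t
  refine ⟨?_, ?_, ?_⟩
  · simp only [cv, Matrix.cons_val, Polynomial.eval_add, Polynomial.eval_sub, Polynomial.eval_mul,
      Polynomial.eval_C, Polynomial.eval_X, Polynomial.eval_pow, Polynomial.eval_one, f0, f1, g0, g1]
    have : e0 * (1 - t^2) + 2 * e1 * t - (1 + t^2) = 0 := by
      apply mul_right_cancel₀ hinf
      rw [← ht'] at he ⊢
      linear_combination he
    linear_combination (ρ - ρ') * this
  · simp only [cv, Matrix.cons_val, Polynomial.eval_sub, Polynomial.eval_mul,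
      Polynomial.eval_C, Polynomial.eval_X, f0, f1, g0, g1]
    linear_combination (ρ' - ρ) * ht'
  · simp only [f0, g0]
    intro hh
    have : (ρ - ρ') * (1 + e0) = 0 := by linarith
    have := (mul_eq_zero.1 this).resolve_right hinf
    apply hne
    have hρρ : ρ = ρ' := by linarith
    ext i
    fin_cases i
    · simp [f0, g0, hρρ]
    · simp [f1, g1, hρρ]

lemma t_inj {c p p' : Pt2} {r ρ : ℝ} (hr : 0 < r)
    (h1 : p ∈ Metric.sphere c r) (h2 : p' ∈ Metric.sphere c r) (hρ : ρ^2 = r^2)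
    (hinf : 1 + (c 0 - p 0) / ρ ≠ 0) (hinf' : 1 + (c 0 - p' 0) / ρ ≠ 0)
    (ht : ((c 1 - p 1) / ρ) / (1 + (c 0 - p 0) / ρ) = ((c 1 - p' 1) / ρ) / (1 + (c 0 - p' 0) / ρ)) :
    p = p' := by
  have hr2 : r^2 ≠ 0 := by positivity
  have hρ0 : ρ ≠ 0 := by rintro rfl; apply hr2; rw [← hρ]; ring
  rw [mem_sph _ _ _ hr] at h1 h2
  have k : ∀ q : Pt2, (q 0 - c 0)^2 + (q 1 - c 1)^2 = r^2 → ((c 0 - q 0) / ρ)^2 + ((c 1 - q 1) / ρ)^2 = 1 := by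
    intro q hq
    rw [div_pow, div_pow, hρ, ← add_div, div_eq_one_iff_eq hr2]; linarith
  have he := k p h1
  have he' := k p' h2
  have f : ∀ q : Pt2, ∀ i, q i = c i - ρ * ((c i - q i) / ρ) := by
    intro q i; field_simp; ring
  have s0 : (c 0 - p 0) / ρ = (c 0 - p' 0) / ρ ∧ (c 1 - p 1) / ρ = (c 1 - p' 1) / ρ := by
    generalize (c 0 - p 0) / ρ = a at *
    generalize (c 1 - p 1) / ρ = b at *
    generalize (c 0 - p' 0) / ρ = a' at *
    generalize (c 1 - p' 1) / ρ = b' at *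
    obtain ⟨t, htt⟩ : ∃ t, t = b / (1 + a) := ⟨_, rfl⟩
    have hb : b = t * (1 + a) := by rw [htt]; field_simp
    have hb' : b' = t * (1 + a') := by rw [htt, ht]; field_simp
    rw [hb] at he; rw [hb'] at he'
    have q1 : (a - 1) + t^2 * (1 + a) = 0 := by
      apply mul_right_cancel₀ hinf; linear_combination he
    have q2 : (a' - 1) + t^2 * (1 + a') = 0 := by
      apply mul_right_cancel₀ hinf'; linear_combination he'
    have : (a - a') * (1 + t^2) = 0 := by linear_combination q1 - q2
    have := (mul_eq_zero.1 this).resolve_right (by positivity)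
    have e : a = a' := by linarith
    exact ⟨e, by rw [hb, hb', e]⟩
  ext i
  fin_cases i
  · show p 0 = p' 0
    rw [f p 0, f p' 0, s0.1]
  · show p 1 = p' 1
    rw [f p 1, f p' 1, s0.2]

/-- the point at infinity -/
lemma inf_inj {c p p' : Pt2} {r ρ : ℝ} (hr : 0 < r)
    (h1 : p ∈ Metric.sphere c r) (h2 : p' ∈ Metric.sphere c r) (hρ : ρ^2 = r^2)
    (hinf : 1 + (c 0 - p 0) / ρ = 0) (hinf' : 1 + (c 0 - p' 0) / ρ = 0) : p = p' := by
  have hr2 : r^2 ≠ 0 := by positivity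
  have hρ0 : ρ ≠ 0 := by rintro rfl; apply hr2; rw [← hρ]; ring
  rw [mem_sph _ _ _ hr] at h1 h2
  have k : ∀ q : Pt2, (q 0 - c 0)^2 + (q 1 - c 1)^2 = r^2 → 1 + (c 0 - q 0) / ρ = 0 → q 0 = c 0 + ρ ∧ q 1 = c 1 := by
    intro q hq hi
    field_simp at hi
    have e : q 0 = c 0 + ρ := by linarith
    refine ⟨e, ?_⟩
    rw [e] at hq
    have : (q 1 - c 1)^2 = 0 := by linarith
    have := pow_eq_zero_iff (two_ne_zero) |>.1 this
    linarith
  obtain ⟨a, b⟩ := k p h1 hinf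
  obtain ⟨a', b'⟩ := k p' h2 hinf'
  ext i
  fin_cases i
  · show p 0 = p' 0
    rw [a, a']
  · show p 1 = p' 1
    rw [b, b']

lemma few_tangent (n k : ℕ) (hk : 2 * n * (4 * k) < k ^ 3)
    (C : Finset (Set Pt2)) (hn : C.card ≤ n) (hne : C.Nonempty) (hC : ∀ s ∈ C, IsCircle2 s)
    (h3 : ¬ ∃ p : Pt2, ∃ c1 ∈ C, ∃ c2 ∈ C, ∃ c3 ∈ C,
            c1 ≠ c2 ∧ c1 ≠ c3 ∧ c2 ≠ c3 ∧
            c1 ∩ c2 = {p} ∧ c1 ∩ c3 = {p} ∧ c2 ∩ c3 = {p}) :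
    ∃ c ∈ C, ∀ N : Finset (Set Pt2), N ⊆ C → (∀ d ∈ N, c ≠ d ∧ Tangent2 c d) →
      N.card ≤ 4 * k + 1 := by
  classical
  have hC' : ∀ s : Set Pt2, ∃ c : Pt2, ∃ r : ℝ, s ∈ C → 0 < r ∧ s = Metric.sphere c r := by
    intro s
    by_cases hs : s ∈ C
    · obtain ⟨c, r, h⟩ := hC s hs
      exact ⟨c, r, fun _ => h⟩
    · exact ⟨0, 0, fun h => absurd h hs⟩
  choose cen rad hcr using hC'
  let S : Finset (ℝ × ℝ × ℝ) := C.image (fun s => (cen s 0, cen s 1, rad s)) ∪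
    C.image (fun s => (cen s 0, cen s 1, - rad s))
  have hScard : S.card ≤ 2 * n := by
    refine (Finset.card_union_le _ _).trans ?_
    have := Finset.card_image_le (s := C) (f := fun s => (cen s 0, cen s 1, rad s))
    have := Finset.card_image_le (s := C) (f := fun s => (cen s 0, cen s 1, - rad s))
    omega
  have hSne : S.Nonempty := (hne.image _).mono Finset.subset_union_left
  have hSmem : ∀ s ∈ C, ∀ ρ, ρ^2 = (rad s)^2 → (cen s 0, cen s 1, ρ) ∈ S := by
    intro s hs ρ hρ
    rcases sq_eq_sq_iff_eq_or_eq_neg.1 hρ with rfl | rfl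
    · exact Finset.mem_union_left _ (Finset.mem_image_of_mem _ hs)
    · exact Finset.mem_union_right _ (Finset.mem_image_of_mem _ hs)
  obtain ⟨s, hs, hT⟩ := core S hSne k (lt_of_le_of_lt (Nat.mul_le_mul_right _ hScard) hk)
  obtain ⟨c, hc, ρ, hρ, rfl⟩ : ∃ c ∈ C, ∃ ρ, ρ^2 = (rad c)^2 ∧ s = (cen c 0, cen c 1, ρ) := by
    rcases Finset.mem_union.1 hs with h | h
    · obtain ⟨c, hc, rfl⟩ := Finset.mem_image.1 h
      exact ⟨c, hc, _, rfl, rfl⟩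
    · obtain ⟨c, hc, rfl⟩ := Finset.mem_image.1 h
      exact ⟨c, hc, _, by ring, rfl⟩
  refine ⟨c, hc, fun N hN hNt => ?_⟩
  have hp' : ∀ d : Set Pt2, ∃ p : Pt2, d ∈ N → c ∩ d = {p} := by
    intro d
    by_cases hd : d ∈ N
    · obtain ⟨p, h⟩ := (hNt d hd).2
      exact ⟨p, fun _ => h⟩
    · exact ⟨0, fun h => absurd h hd⟩
  choose p hp using hp'
  obtain ⟨hr, hcs⟩ := hcr c hc
  have hmem : ∀ d ∈ N, p d ∈ c ∩ d := fun d hd => by rw [hp d hd]; rfl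
  have hpc : ∀ d ∈ N, p d ∈ Metric.sphere (cen c) (rad c) := fun d hd => hcs ▸ (hmem d hd).1
  have hpd : ∀ d ∈ N, p d ∈ Metric.sphere (cen d) (rad d) := fun d hd =>
    (hcr d (hN hd)).2 ▸ (hmem d hd).2
  have hat : ∀ d ∈ N, ATan (cen c) (cen d) (p d) := by
    intro d hd
    refine geo1 hr (hcr d (hN hd)).1 ?_
    rw [← hcs, ← (hcr d (hN hd)).2, hp d hd]
  have hpinj : ∀ d ∈ N, ∀ d' ∈ N, p d = p d' → d = d' := by
    intro d hd d' hd' he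
    by_contra hdd
    refine h3 ⟨p d, c, hc, d, hN hd, d', hN hd', (hNt d hd).1, (hNt d' hd').1, hdd, hp d hd,
      he ▸ hp d' hd', ?_⟩
    obtain ⟨hrd, hds⟩ := hcr d (hN hd)
    obtain ⟨hrd', hds'⟩ := hcr d' (hN hd')
    have m1 := hpd d hd
    have m2 := hpd d' hd'
    rw [← he] at m2
    have hcc : cen d ≠ cen d' := by
      intro hcc
      apply hdd
      rw [hds, hds', hcc]
      rw [Metric.mem_sphere] at m1 m2
      rw [← m1, ← m2, hcc]
    have := geo2 hrd hrd' m1 m2 (geo3 hr (hpc d hd) (hat d hd) (he ▸ hat d' hd') hcc)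
    rwa [← hds, ← hds'] at this
  let inf : Set Pt2 → Prop := fun d => 1 + (cen c 0 - p d 0) / ρ = 0
  let tt : Set Pt2 → ℝ := fun d =>
    ((cen c 1 - p d 1) / ρ) / (1 + (cen c 0 - p d 0) / ρ)
  have hinf : (N.filter inf).card ≤ 1 := by
    rw [Finset.card_le_one]
    intro d hd d' hd'
    rw [Finset.mem_filter] at hd hd'
    exact hpinj d hd.1 d' hd'.1 (inf_inj hr (hpc d hd.1) (hpc d' hd'.1) hρ hd.2 hd'.2)
  have hfin : (N.filter (fun d => ¬ inf d)).card ≤ 4 * k := by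
    have hinj : Set.InjOn tt (N.filter (fun d => ¬ inf d)) := by
      intro d hd d' hd' he
      rw [Finset.mem_coe, Finset.mem_filter] at hd hd'
      exact hpinj d hd.1 d' hd'.1 (t_inj hr (hpc d hd.1) (hpc d' hd'.1) hρ hd.2 hd'.2 he)
    rw [← Finset.card_image_of_injOn hinj]
    apply hT
    intro t ht
    obtain ⟨d, hd, rfl⟩ := Finset.mem_image.1 ht
    rw [Finset.mem_filter] at hd
    obtain ⟨ρ', hρ', htouch⟩ := geo4 hr (hcr d (hN hd.1)).1 (hpc d hd.1) (hpd d hd.1) (hat d hd.1) hρ hd.2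
    exact ⟨_, hSmem d (hN hd.1) ρ' hρ', htouch⟩
  have := Finset.card_filter_add_card_filter_not (s := N) inf
  omega

lemma count_pairs (n k : ℕ) (hk : 2 * n * (4 * k) < k ^ 3) (m : ℕ) :
    ∀ (C : Finset (Set Pt2)), C.card = m → C.card ≤ n → (∀ s ∈ C, IsCircle2 s) →
    (¬ ∃ p : Pt2, ∃ c1 ∈ C, ∃ c2 ∈ C, ∃ c3 ∈ C,
            c1 ≠ c2 ∧ c1 ≠ c3 ∧ c2 ≠ c3 ∧
            c1 ∩ c2 = {p} ∧ c1 ∩ c3 = {p} ∧ c2 ∩ c3 = {p}) →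
    ∃ F : Finset (Set (Set Pt2)), {s : Set (Set Pt2) | ∃ c1 ∈ C, ∃ c2 ∈ C, c1 ≠ c2 ∧ Tangent2 c1 c2 ∧
            s = {c1, c2}} ⊆ F ∧ F.card ≤ m * (4 * k + 1) := by
  classical
  induction m with
  | zero =>
    intro C hm _ _ _
    rw [Finset.card_eq_zero] at hm
    subst hm
    exact ⟨∅, by simp⟩
  | succ m ih =>
    intro C hm hn hC h3
    obtain ⟨c, hc, hN⟩ := few_tangent n k hk C hn (Finset.card_pos.1 (by omega)) hC h3
    have hcard := Finset.card_erase_of_mem hc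
    obtain ⟨F, hF, hFc⟩ := ih (C.erase c) (by omega) (by omega)
      (fun s hs => hC s (Finset.mem_of_mem_erase hs)) (by
        rintro ⟨p, c1, h1, c2, h2, c3, h3', h⟩
        exact h3 ⟨p, c1, Finset.mem_of_mem_erase h1, c2, Finset.mem_of_mem_erase h2, c3,
          Finset.mem_of_mem_erase h3', h⟩)
    let N := C.filter (fun d => c ≠ d ∧ Tangent2 c d)
    have hNc := hN N (Finset.filter_subset _ _) (fun d hd => (Finset.mem_filter.1 hd).2)
    refine ⟨F ∪ N.image (fun d => {c, d}), ?_, ?_⟩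
    · rintro s ⟨c1, h1, c2, h2, hne, ht, rfl⟩
      rw [Finset.coe_union]
      by_cases e1 : c1 = c
      · subst e1
        right
        exact Finset.mem_coe.2 (Finset.mem_image.2 ⟨c2, Finset.mem_filter.2 ⟨h2, hne, ht⟩, rfl⟩)
      · by_cases e2 : c2 = c
        · subst e2
          right
          refine Finset.mem_coe.2 (Finset.mem_image.2 ⟨c1, Finset.mem_filter.2 ⟨h1, hne.symm, ?_⟩,
            Set.pair_comm _ _⟩)
          obtain ⟨p, hp⟩ := ht
          exact ⟨p, by rw [Set.inter_comm, hp]⟩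
        · left
          exact hF ⟨c1, Finset.mem_erase.2 ⟨e1, h1⟩, c2, Finset.mem_erase.2 ⟨e2, h2⟩, hne, ht, rfl⟩
    · refine (Finset.card_union_le _ _).trans ?_
      have := Finset.card_image_le (s := N) (f := fun d => ({c, d} : Set (Set Pt2)))
      rw [add_mul]
      omega

theorem circle_tangent_pairs :
    ∃ A : ℝ, 0 < A ∧
      ∀ (n : ℕ) (C : Finset (Set Pt2)),
        C.card = n → (∀ s ∈ C, IsCircle2 s) →
        (¬ ∃ p : Pt2, ∃ c1 ∈ C, ∃ c2 ∈ C, ∃ c3 ∈ C,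
            c1 ≠ c2 ∧ c1 ≠ c3 ∧ c2 ≠ c3 ∧
            c1 ∩ c2 = {p} ∧ c1 ∩ c3 = {p} ∧ c2 ∩ c3 = {p}) →
        (({s : Set (Set Pt2) | ∃ c1 ∈ C, ∃ c2 ∈ C, c1 ≠ c2 ∧ Tangent2 c1 c2 ∧
            s = {c1, c2}}).ncard : ℝ) ≤ A * (n : ℝ) ^ ((3 : ℝ) / 2) := by
  refine ⟨17, by norm_num, fun n C hn hC h3 => ?_⟩
  set k := Nat.sqrt (8 * n) + 1 with hk
  have hk1 : 8 * n < k * k := Nat.lt_succ_sqrt _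
  have hkk : 2 * n * (4 * k) < k ^ 3 := by
    have : 0 < k := by omega
    calc 2 * n * (4 * k) = 8 * n * k := by ring
      _ < k * k * k := Nat.mul_lt_mul_of_pos_right hk1 this
      _ = k ^ 3 := by ring
  obtain ⟨F, hF, hFc⟩ := count_pairs n k hkk n C hn hn.le hC h3
  have h1 : ({s : Set (Set Pt2) | ∃ c1 ∈ C, ∃ c2 ∈ C, c1 ≠ c2 ∧ Tangent2 c1 c2 ∧
            s = {c1, c2}}).ncard ≤ n * (4 * k + 1) := by
    refine (Set.ncard_le_ncard hF F.finite_toSet).trans ?_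
    rwa [Set.ncard_coe_finset]
  have h2 : (({s : Set (Set Pt2) | ∃ c1 ∈ C, ∃ c2 ∈ C, c1 ≠ c2 ∧ Tangent2 c1 c2 ∧
            s = {c1, c2}}).ncard : ℝ) ≤ n * (4 * k + 1) := by exact_mod_cast h1
  refine h2.trans ?_
  rcases Nat.eq_zero_or_pos n with h0 | h0
  · rw [h0]; simp
  have hnp : (1 : ℝ) ≤ n := by exact_mod_cast h0
  have hpow : (n : ℝ) ^ ((3 : ℝ) / 2) = n * √n := by
    rw [show (3 : ℝ) / 2 = 1 + 1 / 2 by norm_num, Real.rpow_add (by linarith), Real.rpow_one,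
      Real.sqrt_eq_rpow]
  have hs1 : 1 ≤ √(n : ℝ) := Real.one_le_sqrt.2 hnp
  have hkr : (k : ℝ) ≤ 3 * √n + 1 := by
    have : (Nat.sqrt (8 * n) : ℝ) ≤ 3 * √n := by
      refine (Real.nat_sqrt_le_real_sqrt).trans ?_
      rw [Real.sqrt_le_left (by positivity), mul_pow, Real.sq_sqrt (by linarith)]
      push_cast; linarith
    rw [hk]; push_cast; linarith
  rw [hpow]
  have : (4 * (k : ℝ) + 1) ≤ 17 * √n := by linarith
  calc (n : ℝ) * (4 * k + 1) ≤ n * (17 * √n) := by gcongr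
    _ = 17 * (n * √n) := by ring
end
end
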